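/- Let (λ_N)_{N≥2} be any sequence of positive reals with N·λ_N → 1 as N → ∞. Then E(λ_N, N) − E(λ_N, N−1) − λ_N (N−1) ŵ(0) → 0 as N → ∞. -/

import Mathlib

open MeasureTheory Real

noncomputable section

/-- The unit cube `[0,1]^{dN}` in the configuration space of `N` particles in `ℝ^d`. -/
def cube (d N : ℕ) : Set (Fin N → Fin d → ℝ) :=
  Set.univ.pi fun _ => Set.univ.pi fun _ => Set.Icc (0 : ℝ) 1

/-- The unit cube `[0,1]^d` in `ℝ^d`. -/
def cube1 (d : ℕ) : Set (Fin d → ℝ) :=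
  Set.univ.pi fun _ => Set.Icc (0 : ℝ) 1

/-- `Ψ` is admissible: smooth, `ℤ^d`-periodic in each particle variable, symmetric under
permutations of the particles, and `L²`-normalized on the unit cube. -/
def IsAdmissible (d N : ℕ) (Ψ : (Fin N → Fin d → ℝ) → ℂ) : Prop :=
  ContDiff ℝ (⊤ : ℕ∞) Ψ ∧
  (∀ (x : Fin N → Fin d → ℝ) (j : Fin N) (v : Fin d → ℤ),
      Ψ (Function.update x j (x j + fun i => (v i : ℝ))) = Ψ x) ∧
  (∀ (σ : Equiv.Perm (Fin N)) (x : Fin N → Fin d → ℝ), Ψ (x ∘ σ) = Ψ x) ∧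
  (∫ x in cube d N, ‖Ψ x‖ ^ 2) = 1

/-- The energy `ℰ_{λ,N}(Ψ)` of a wave function `Ψ`. -/
def energy (d N : ℕ) (lam : ℝ) (w : (Fin d → ℝ) → ℝ)
    (Ψ : (Fin N → Fin d → ℝ) → ℂ) : ℝ :=
  ∫ x in cube d N,
    ((∑ j : Fin N, ∑ i : Fin d, ‖fderiv ℝ Ψ x (Pi.single j (Pi.single i 1))‖ ^ 2) +
      lam * (∑ j : Fin N, ∑ k : Fin N, if j < k then w (x j - x k) else 0) * ‖Ψ x‖ ^ 2)

/-- The ground state energy `E(λ,N)`. -/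
def GSE (d N : ℕ) (lam : ℝ) (w : (Fin d → ℝ) → ℝ) : ℝ :=
  sInf {e | ∃ Ψ, IsAdmissible d N Ψ ∧ energy d N lam w Ψ = e}

/-- The interaction potential defined by the absolutely convergent Fourier series
`w(x) = ∑_{p ∈ (2πℤ)^d} ŵ(p) e^{ip·x}`, with the lattice point `p = 2πk` indexed by
`k ∈ ℤ^d`. -/
def wOf (d : ℕ) (hw : (Fin d → ℤ) → ℝ) (x : Fin d → ℝ) : ℝ :=
  (∑' k : Fin d → ℤ,
    (hw k : ℂ) * Complex.exp (Complex.I * ((∑ i, (2 * π * (k i : ℝ)) * x i : ℝ) : ℂ))).re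

/-- `|p|²` for the lattice point `p = 2πk`. -/
def pSq (d : ℕ) (k : Fin d → ℤ) : ℝ := ∑ i, (2 * π * (k i : ℝ)) ^ 2

/-- The elementary excitation energy `e_p = √(|p|⁴ + 2|p|²ŵ(p))`. -/
def ePk (d : ℕ) (hw : (Fin d → ℤ) → ℝ) (k : Fin d → ℤ) : ℝ :=
  Real.sqrt (pSq d k ^ 2 + 2 * pSq d k * hw k)

/-- The Bogoliubov coefficient `α_p = ŵ(p)/(|p|² + ŵ(p) + e_p)`. -/
def alphaP (d : ℕ) (hw : (Fin d → ℤ) → ℝ) (k : Fin d → ℤ) : ℝ :=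
  hw k / (pSq d k + hw k + ePk d hw k)

/-- The Bogoliubov ground state energy
`e_B = -(1/2) ∑_{p ≠ 0} (|p|² + ŵ(p) - e_p)`. -/
def eB (d : ℕ) (hw : (Fin d → ℤ) → ℝ) : ℝ :=
  -(1 / 2) * ∑' k : {k : Fin d → ℤ // k ≠ 0}, (pSq d k.1 + hw k.1 - ePk d hw k.1)

/-- The projection `Q_j` removing the condensate in the `j`-th variable. -/
def Qop (d N : ℕ) (j : Fin N) (Ψ : (Fin N → Fin d → ℝ) → ℂ) :
    (Fin N → Fin d → ℝ) → ℂ :=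
  fun x => Ψ x - ∫ y in cube1 d, Ψ (Function.update x j y)

/-- The expected number of excited particles `⟨𝒩₊⟩_Ψ`. -/
def NplusExp (d N : ℕ) (Ψ : (Fin N → Fin d → ℝ) → ℂ) : ℝ :=
  ∑ j : Fin N, ∫ x in cube d N, ‖Qop d N j Ψ x‖ ^ 2

/-- The second moment `⟨𝒩₊²⟩_Ψ` of the number of excited particles. -/
def NplusSqExp (d N : ℕ) (Ψ : (Fin N → Fin d → ℝ) → ℂ) : ℝ :=
  ∑ j : Fin N, ∑ k : Fin N, ∫ x in cube d N, ‖Qop d N j (Qop d N k Ψ) x‖ ^ 2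

/-!
For `λ ≥ 0` the binding energy is squeezed as
`λ (ŵ(0) - w(0)) ≤ E(λ, n + 1) - E(λ, n) - λ n ŵ(0) ≤ 0`, and `N λ_N → 1` forces `λ_N → 0`.

For the upper bound, add a particle in the constant orbital: as `w` has mean `ŵ(0)`, this costs
exactly `λ n ŵ(0)`. The state `Ψ ⊗ 1` is not symmetric, but `f ↦ |∇√f|²` is convex, so the symmetric
state `(∑_σ |(Ψ ⊗ 1) ∘ σ|²)^{1/2}` has no larger energy per unit mass.

For the lower bound, freeze one particle of an `(n + 1)`-particle state. The remaining particles
have energy at least `E(λ, n)` per unit mass, and by symmetry the interaction of the frozen particle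
with the others is on average `2 / (n + 1)` of the total interaction. Since `ŵ ≥ 0`, all terms of
`∑_{j,k} w(x_j - x_k) = ∑_p ŵ(p) |∑_j e^{ip·x_j}|²` except `p = 0` may be dropped, so this share is
at least `(n + 1) ŵ(0) - w(0)`.
-/

section FourierPotential

variable {d : ℕ} {hw : (Fin d → ℤ) → ℝ}

/-- The phase `p · x` of the plane wave with momentum `p = 2πk`. -/
def phase (k : Fin d → ℤ) (x : Fin d → ℝ) : ℝ :=
  ∑ i, (2 * π * (k i : ℝ)) * x i

lemma phase_zero_left (x : Fin d → ℝ) : phase 0 x = 0 := by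
  simp [phase]

lemma phase_neg (k : Fin d → ℤ) (x : Fin d → ℝ) : phase k (-x) = -phase k x := by
  simp [phase]

lemma phase_sub (k : Fin d → ℤ) (x y : Fin d → ℝ) : phase k (x - y) = phase k x - phase k y := by
  simp [phase, mul_sub]

@[fun_prop]
lemma continuous_phase (k : Fin d → ℤ) : Continuous (phase k) := by
  unfold phase
  fun_prop

lemma hasSum_wOf (hs : Summable hw) (x : Fin d → ℝ) :
    HasSum (fun k => hw k * cos (phase k x)) (wOf d hw x) := by
  have hsum : Summable fun k => (hw k : ℂ) * Complex.exp (Complex.I * (phase k x : ℂ)) := by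
    refine .of_norm_bounded hs.abs fun k => ?_
    rw [norm_mul, mul_comm Complex.I, Complex.norm_exp_ofReal_mul_I, Complex.norm_real, mul_one,
      Real.norm_eq_abs]
  convert! Complex.hasSum_re hsum.hasSum using 2 with k
  rw [mul_comm Complex.I, Complex.re_ofReal_mul, Complex.exp_ofReal_mul_I_re]

lemma wOf_neg (hs : Summable hw) (x : Fin d → ℝ) : wOf d hw (-x) = wOf d hw x :=
  (hasSum_wOf hs (-x)).unique <| by
    simpa only [phase_neg, cos_neg] using hasSum_wOf hs x

lemma norm_mul_cos_le (a θ : ℝ) : ‖a * cos θ‖ ≤ |a| := by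
  rw [norm_mul]
  exact mul_le_of_le_one_right (abs_nonneg a) (abs_cos_le_one θ)

lemma continuous_wOf (hs : Summable hw) : Continuous (wOf d hw) := by
  rw [← funext fun x => (hasSum_wOf hs x).tsum_eq]
  exact continuous_tsum (fun k => by fun_prop) hs.abs fun k x => norm_mul_cos_le _ _

lemma sum_sum_cos_sub {ι : Type*} (s : Finset ι) (θ : ι → ℝ) :
    ∑ i ∈ s, ∑ j ∈ s, cos (θ i - θ j) = (∑ i ∈ s, cos (θ i)) ^ 2 + (∑ i ∈ s, sin (θ i)) ^ 2 := by
  simp only [cos_sub, Finset.sum_add_distrib, sq, Finset.sum_mul_sum]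

lemma card_sq_mul_le_sum_sum_wOf {ι : Type*} [Fintype ι] (hw_nonneg : ∀ k, 0 ≤ hw k)
    (hs : Summable hw) (x : ι → Fin d → ℝ) :
    (Fintype.card ι : ℝ) ^ 2 * hw 0 ≤ ∑ i, ∑ j, wOf d hw (x i - x j) := by
  have hsum : HasSum
      (fun k => hw k * ((∑ i, cos (phase k (x i))) ^ 2 + (∑ i, sin (phase k (x i))) ^ 2))
      (∑ i, ∑ j, wOf d hw (x i - x j)) := by
    simp only [← sum_sum_cos_sub, Finset.mul_sum, ← phase_sub]
    exact hasSum_sum fun i _ => hasSum_sum fun j _ => hasSum_wOf hs _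
  calc (Fintype.card ι : ℝ) ^ 2 * hw 0
      = hw 0 * ((∑ i, cos (phase 0 (x i))) ^ 2 + (∑ i, sin (phase 0 (x i))) ^ 2) := by
        simp [phase_zero_left, mul_comm]
    _ ≤ ∑ i, ∑ j, wOf d hw (x i - x j) :=
        le_hasSum hsum 0 fun k _ => mul_nonneg (hw_nonneg k) (by positivity)

end FourierPotential

section CubeIntegrals

variable {d n : ℕ}

lemma isCompact_cube (d n : ℕ) : IsCompact (cube d n) :=
  isCompact_univ_pi fun _ => isCompact_univ_pi fun _ => isCompact_Icc

lemma isCompact_cube1 (d : ℕ) : IsCompact (cube1 d) :=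
  isCompact_univ_pi fun _ => isCompact_Icc

lemma restrict_cube1 (d : ℕ) :
    volume.restrict (cube1 d) = Measure.pi fun _ => volume.restrict (Set.Icc (0 : ℝ) 1) :=
  Measure.restrict_pi_pi _ _

lemma restrict_cube (d n : ℕ) :
    volume.restrict (cube d n) = Measure.pi fun _ => volume.restrict (cube1 d) :=
  Measure.restrict_pi_pi _ _

instance isProbabilityMeasure_restrict_cube1 (d : ℕ) :
    IsProbabilityMeasure (volume.restrict (cube1 d)) := by
  have : IsProbabilityMeasure (volume.restrict (Set.Icc (0 : ℝ) 1)) := ⟨by simp⟩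
  rw [restrict_cube1]
  infer_instance

instance isProbabilityMeasure_restrict_cube (d n : ℕ) :
    IsProbabilityMeasure (volume.restrict (cube d n)) := by
  rw [restrict_cube]
  infer_instance

lemma integrable_cube1 {E : Type*} [NormedAddCommGroup E] {f : (Fin d → ℝ) → E}
    (hf : Continuous f) : Integrable f (volume.restrict (cube1 d)) :=
  hf.continuousOn.integrableOn_compact (isCompact_cube1 d)

lemma integrable_cube {E : Type*} [NormedAddCommGroup E] {f : (Fin n → Fin d → ℝ) → E}
    (hf : Continuous f) : Integrable f (volume.restrict (cube d n)) :=
  hf.continuousOn.integrableOn_compact (isCompact_cube d n)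

lemma integral_pi_comp_perm {ι α E : Type*} [Fintype ι] [MeasurableSpace α]
    [NormedAddCommGroup E] [NormedSpace ℝ E] (μ : Measure α) [SigmaFinite μ]
    (σ : Equiv.Perm ι) (f : (ι → α) → E) :
    ∫ x, f (x ∘ σ) ∂Measure.pi (fun _ => μ) = ∫ x, f x ∂Measure.pi (fun _ => μ) :=
  (measurePreserving_arrowCongr' (fun _ => μ) (fun _ => μ) σ.symm (MeasurableEquiv.refl α)
    fun _ => .id μ).integral_comp' f

lemma integral_cube_comp_perm {E : Type*} [NormedAddCommGroup E] [NormedSpace ℝ E]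
    (σ : Equiv.Perm (Fin n)) (f : (Fin n → Fin d → ℝ) → E) :
    ∫ x in cube d n, f (x ∘ σ) = ∫ x in cube d n, f x := by
  rw [restrict_cube]
  exact integral_pi_comp_perm _ σ f

lemma integral_pi_succ {α E : Type*} [MeasurableSpace α] [NormedAddCommGroup E] [NormedSpace ℝ E]
    (μ : Measure α) [SigmaFinite μ] {f : (Fin (n + 1) → α) → E}
    (hf : Integrable f (Measure.pi fun _ => μ)) :
    ∫ x, f x ∂Measure.pi (fun _ => μ) =
      ∫ y, ∫ x, f (Fin.cons y x) ∂Measure.pi (fun _ => μ) ∂μ := by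
  have hpres := (measurePreserving_piFinSuccAbove (fun _ : Fin (n + 1) => μ) 0).symm
  have hcons (z : α × (Fin n → α)) :
      (MeasurableEquiv.piFinSuccAbove (fun _ : Fin (n + 1) => α) 0).symm z =
        Fin.cons z.1 z.2 := by
    simp [MeasurableEquiv.piFinSuccAbove, Fin.insertNthEquiv]
  calc ∫ x, f x ∂Measure.pi (fun _ => μ)
      = ∫ z, f (Fin.cons z.1 z.2) ∂μ.prod (Measure.pi fun _ => μ) := by
        simpa only [hcons] using (hpres.integral_comp' f).symm
    _ = ∫ y, ∫ x, f (Fin.cons y x) ∂Measure.pi (fun _ => μ) ∂μ :=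
        integral_prod _ (by
          simpa only [Function.comp_def, hcons] using hpres.integrable_comp_of_integrable hf)

lemma integral_cube_succ {E : Type*} [NormedAddCommGroup E] [NormedSpace ℝ E]
    {f : (Fin (n + 1) → Fin d → ℝ) → E} (hf : Continuous f) :
    ∫ x in cube d (n + 1), f x = ∫ y in cube1 d, ∫ x in cube d n, f (Fin.cons y x) := by
  have hint := integrable_cube hf
  rw [restrict_cube] at hint
  simpa only [restrict_cube] using integral_pi_succ _ hint

lemma continuous_integral_cube_cons {E : Type*} [NormedAddCommGroup E] [NormedSpace ℝ E]
    {f : (Fin (n + 1) → Fin d → ℝ) → E} (hf : Continuous f) :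
    Continuous fun y => ∫ x in cube d n, f (Fin.cons y x) := by
  refine continuous_parametric_integral_of_continuous ?_ (isCompact_cube d n)
  exact hf.comp (Continuous.finCons continuous_fst continuous_snd)

lemma integral_Icc_cexp_two_pi_int_mul {m : ℤ} (hm : m ≠ 0) :
    ∫ t in Set.Icc (0 : ℝ) 1, Complex.exp (2 * π * m * Complex.I * t) = 0 := by
  rw [integral_Icc_eq_integral_Ioc, ← intervalIntegral.integral_of_le zero_le_one,
    integral_exp_mul_complex (by simp [hm])]
  have hperiod : Complex.exp (2 * π * m * Complex.I) = 1 := by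
    rw [← Complex.exp_int_mul_two_pi_mul_I m]
    ring_nf
  simp [hperiod]

lemma integral_cube1_cexp_phase {k : Fin d → ℤ} (hk : k ≠ 0) :
    ∫ y in cube1 d, Complex.exp (phase k y * Complex.I) = 0 := by
  have hprod (y : Fin d → ℝ) : Complex.exp (phase k y * Complex.I) =
      ∏ i, Complex.exp (2 * π * k i * Complex.I * y i) := by
    rw [← Complex.exp_sum, phase, Complex.ofReal_sum, Finset.sum_mul]
    push_cast
    simp only [mul_right_comm _ _ Complex.I]
  obtain ⟨i, hi⟩ := Function.ne_iff.1 hk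
  simp only [hprod, restrict_cube1]
  rw [integral_fintype_prod_eq_prod fun i (t : ℝ) => Complex.exp (2 * π * k i * Complex.I * t)]
  exact Finset.prod_eq_zero (Finset.mem_univ i) (integral_Icc_cexp_two_pi_int_mul hi)

lemma integral_cube1_cos_phase_sub {k : Fin d → ℤ} (hk : k ≠ 0) (c : Fin d → ℝ) :
    ∫ y in cube1 d, cos (phase k (y - c)) = 0 := by
  have hre (y : Fin d → ℝ) : cos (phase k (y - c)) =
      RCLike.re (Complex.exp (phase k y * Complex.I) * Complex.exp (-phase k c * Complex.I)) := by
    rw [← Complex.exp_add, ← add_mul, ← sub_eq_add_neg, ← Complex.ofReal_sub, ← phase_sub,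
      RCLike.re_to_complex, Complex.exp_ofReal_mul_I_re]
  simp only [hre]
  rw [integral_re (integrable_cube1 (by fun_prop)), integral_mul_const,
    integral_cube1_cexp_phase hk, zero_mul, map_zero]

lemma integral_cube1_wOf_sub {hw : (Fin d → ℤ) → ℝ} (hs : Summable hw) (c : Fin d → ℝ) :
    ∫ y in cube1 d, wOf d hw (y - c) = hw 0 := by
  have hsum : HasSum (fun k => ∫ y in cube1 d, hw k * cos (phase k (y - c)))
      (∫ y in cube1 d, wOf d hw (y - c)) :=
    hasSum_integral_of_dominated_convergence (fun k _ => |hw k|)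
      (fun k => (integrable_cube1 (by fun_prop)).aestronglyMeasurable)
      (fun k => .of_forall fun y => norm_mul_cos_le _ _) (.of_forall fun _ => hs.abs)
      (integrable_const _) (.of_forall fun y => hasSum_wOf hs (y - c))
  have hzero : ∫ y in cube1 d, hw 0 * cos (phase 0 (y - c)) = hw 0 := by
    simp only [phase_zero_left, cos_zero, mul_one, integral_const, probReal_univ, one_smul]
  rw [← hzero]
  refine hsum.unique (hasSum_single 0 fun k hk => ?_)
  rw [integral_const_mul, integral_cube1_cos_phase_sub hk, mul_zero]

end CubeIntegrals

section PairPotential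

variable {E : Type*} [AddGroup E] {n : ℕ} {w : E → ℝ}

/-- The total interaction energy `∑_{j<k} w(x_j - x_k)` of a configuration of particles. -/
def pairPotential (w : E → ℝ) (x : Fin n → E) : ℝ :=
  ∑ j : Fin n, ∑ k : Fin n, if j < k then w (x j - x k) else 0

/-- The interaction energy `∑_{j≠i} w(x_i - x_j)` of particle `i` with all the others, encoded by
subtracting the self-interaction `w 0` from the sum over all `j`. -/
def interactionOf (w : E → ℝ) (x : Fin n → E) (i : Fin n) : ℝ :=
  ∑ j, w (x i - x j) - w 0

lemma sum_interactionOf_add (w : E → ℝ) (x : Fin n → E) :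
    ∑ i, interactionOf w x i + n * w 0 = ∑ i, ∑ j, w (x i - x j) := by
  simp [interactionOf]

lemma sum_interactionOf (hw_even : ∀ v, w (-v) = w v) (x : Fin n → E) :
    ∑ i, interactionOf w x i = 2 * pairPotential w x := by
  have hswap : ∑ j : Fin n, ∑ k : Fin n, (if k < j then w (x j - x k) else 0) =
      pairPotential w x := by
    rw [Finset.sum_comm, pairPotential]
    refine Finset.sum_congr rfl fun j _ => Finset.sum_congr rfl fun k _ => ?_
    rw [← hw_even, neg_sub]
  have hdiag : ∑ j : Fin n, ∑ k : Fin n, (if k = j then w (x j - x k) else 0) = n * w 0 := by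
    simp
  have htrichotomy (j k : Fin n) : w (x j - x k) = (if j < k then w (x j - x k) else 0) +
      (if k < j then w (x j - x k) else 0) + (if k = j then w (x j - x k) else 0) := by
    rcases lt_trichotomy j k with h | rfl | h
    · simp [h, h.not_gt, h.ne']
    · simp
    · simp [h, h.not_gt, h.ne]
  have hsum : ∑ j, ∑ k, w (x j - x k) = pairPotential w x + pairPotential w x + n * w 0 := by
    rw [Finset.sum_congr rfl fun j _ => Finset.sum_congr rfl fun k _ => htrichotomy j k]
    simp only [Finset.sum_add_distrib, hswap, hdiag, ← pairPotential.eq_def]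
  linarith [sum_interactionOf_add w x]

lemma interactionOf_comp_perm (w : E → ℝ) (σ : Equiv.Perm (Fin n)) (x : Fin n → E) (i : Fin n) :
    interactionOf w (x ∘ σ) i = interactionOf w x (σ i) := by
  simp only [interactionOf, Function.comp_apply, Equiv.sum_comp σ fun j => w (x (σ i) - x j)]

lemma pairPotential_comp_perm (hw_even : ∀ v, w (-v) = w v) (σ : Equiv.Perm (Fin n))
    (x : Fin n → E) : pairPotential w (x ∘ σ) = pairPotential w x := by
  refine mul_left_cancel₀ (two_ne_zero (α := ℝ)) ?_
  simp only [← sum_interactionOf hw_even, interactionOf_comp_perm]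
  exact Equiv.sum_comp σ (interactionOf w x)

lemma interactionOf_cons_zero (w : E → ℝ) (y : E) (x : Fin n → E) :
    interactionOf w (Fin.cons y x : Fin (n + 1) → E) 0 = ∑ j, w (y - x j) := by
  simp [interactionOf, Fin.sum_univ_succ]

lemma pairPotential_cons (w : E → ℝ) (y : E) (x : Fin n → E) :
    pairPotential w (Fin.cons y x : Fin (n + 1) → E) =
      pairPotential w x + ∑ j, w (y - x j) := by
  simp [pairPotential, Fin.sum_univ_succ, add_comm]

variable [TopologicalSpace E] [ContinuousSub E]

@[fun_prop]
lemma continuous_pairPotential (hw_cont : Continuous w) :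
    Continuous (pairPotential w : (Fin n → E) → ℝ) := by
  refine continuous_finsetSum _ fun j _ => continuous_finsetSum _ fun k _ => ?_
  split_ifs <;> fun_prop

@[fun_prop]
lemma continuous_interactionOf (hw_cont : Continuous w) (i : Fin n) :
    Continuous fun x : Fin n → E => interactionOf w x i := by
  unfold interactionOf
  fun_prop

end PairPotential

lemma mul_le_two_mul_pairPotential_wOf {d : ℕ} {hw : (Fin d → ℤ) → ℝ} (hw_nonneg : ∀ k, 0 ≤ hw k)
    (hs : Summable hw) {n : ℕ} (x : Fin n → Fin d → ℝ) :
    n * (n * hw 0 - wOf d hw 0) ≤ 2 * pairPotential (wOf d hw) x := by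
  have hpos := card_sq_mul_le_sum_sum_wOf hw_nonneg hs x
  rw [Fintype.card_fin, ← sum_interactionOf_add, sum_interactionOf (wOf_neg hs)] at hpos
  linarith

section CoordinateMaps

variable {ι κ E F : Type*} [NormedAddCommGroup E] [NormedSpace ℝ E]
  [NormedAddCommGroup F] [NormedSpace ℝ F]

lemma contDiff_comp_right [Fintype ι] [Fintype κ] {k : WithTop ℕ∞} {f : (ι → E) → F}
    (hf : ContDiff ℝ k f) (e : ι → κ) :
    ContDiff ℝ k fun x : κ → E => f (x ∘ e) :=
  hf.comp (contDiff_pi.2 fun i => contDiff_apply ℝ E (e i))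

lemma fderiv_comp_right_apply [Finite ι] [Finite κ] {f : (ι → E) → F} {e : ι → κ} {x : κ → E}
    (hf : DifferentiableAt ℝ f (x ∘ e)) (v : κ → E) :
    fderiv ℝ (fun x : κ → E => f (x ∘ e)) x v = fderiv ℝ f (x ∘ e) (v ∘ e) := by
  cases nonempty_fintype ι
  cases nonempty_fintype κ
  have he : HasFDerivAt (fun x : κ → E => x ∘ e)
      (ContinuousLinearMap.pi fun i => .proj (R := ℝ) (φ := fun _ : κ => E) (e i)) x := by
    rw [hasFDerivAt_pi]
    exact fun i => hasFDerivAt_apply (e i) x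
  exact congrArg (· v) (hf.hasFDerivAt.comp x he).fderiv

lemma contDiff_comp_cons {n : ℕ} {k : WithTop ℕ∞} {f : (Fin (n + 1) → E) → F}
    (hf : ContDiff ℝ k f) (y : E) : ContDiff ℝ k fun x : Fin n → E => f (Fin.cons y x) :=
  hf.comp <| contDiff_pi.2 <|
    Fin.cases (by simpa using contDiff_const) fun j => by simpa using contDiff_apply ℝ E j

lemma fderiv_comp_cons_apply {n : ℕ} {f : (Fin (n + 1) → E) → F} {y : E} {x : Fin n → E}
    (hf : DifferentiableAt ℝ f (Fin.cons y x)) (v : Fin n → E) :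
    fderiv ℝ (fun x : Fin n → E => f (Fin.cons y x)) x v =
      fderiv ℝ f (Fin.cons y x) (Fin.cons 0 v) := by
  have hcons : HasFDerivAt (fun x : Fin n → E => (Fin.cons y x : Fin (n + 1) → E))
      (ContinuousLinearMap.finCons 0 (.id ℝ _)) x :=
    (hasFDerivAt_const y x).finCons (hasFDerivAt_id x)
  exact congrArg (· v) (hf.hasFDerivAt.comp x hcons).fderiv

end CoordinateMaps

section KineticDensity

variable {d m n : ℕ}

/-- The kinetic energy density `∑_j |∇_{x_j} Ψ|²`. -/
def kineticDensity (Ψ : (Fin n → Fin d → ℝ) → ℂ) (x : Fin n → Fin d → ℝ) : ℝ :=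
  ∑ j : Fin n, ∑ i : Fin d, ‖fderiv ℝ Ψ x (Pi.single j (Pi.single i 1))‖ ^ 2

lemma kineticDensity_nonneg (Ψ : (Fin n → Fin d → ℝ) → ℂ) (x : Fin n → Fin d → ℝ) :
    0 ≤ kineticDensity Ψ x := by
  unfold kineticDensity
  positivity

lemma continuous_kineticDensity {Ψ : (Fin n → Fin d → ℝ) → ℂ} (hΨ : ContDiff ℝ 1 Ψ) :
    Continuous (kineticDensity Ψ) := by
  have := hΨ.continuous_fderiv one_ne_zero
  unfold kineticDensity
  fun_prop

lemma kineticDensity_const_mul {Ψ : (Fin n → Fin d → ℝ) → ℂ} {x : Fin n → Fin d → ℝ}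
    (hΨ : DifferentiableAt ℝ Ψ x) (c : ℂ) :
    kineticDensity (fun x => c * Ψ x) x = ‖c‖ ^ 2 * kineticDensity Ψ x := by
  unfold kineticDensity
  rw [fderiv_const_mul hΨ]
  simp [mul_pow, Finset.mul_sum]

lemma kineticDensity_comp_injective {e : Fin n → Fin m} (he : Function.Injective e)
    {Ψ : (Fin n → Fin d → ℝ) → ℂ} {x : Fin m → Fin d → ℝ} (hΨ : DifferentiableAt ℝ Ψ (x ∘ e)) :
    kineticDensity (fun x => Ψ (x ∘ e)) x = kineticDensity Ψ (x ∘ e) := by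
  refine (Fintype.sum_of_injective e he _ _ (fun k hk => ?_) fun j => ?_).symm
  · have hsingle (u : Fin d → ℝ) : Pi.single k u ∘ e = 0 :=
      Function.update_comp_eq_of_forall_ne _ _ fun j hj => hk ⟨j, hj⟩
    simp [fderiv_comp_right_apply hΨ, hsingle]
  · have hsingle (u : Fin d → ℝ) : Pi.single (e j) u ∘ e = Pi.single j u :=
      Function.update_comp_eq_of_injective _ he j u
    simp only [fderiv_comp_right_apply hΨ, hsingle]

lemma kineticDensity_comp_cons_le {Ψ : (Fin (n + 1) → Fin d → ℝ) → ℂ} {y : Fin d → ℝ}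
    {x : Fin n → Fin d → ℝ} (hΨ : DifferentiableAt ℝ Ψ (Fin.cons y x)) :
    kineticDensity (fun x => Ψ (Fin.cons y x)) x ≤ kineticDensity Ψ (Fin.cons y x) := by
  have hsingle (j : Fin n) (u : Fin d → ℝ) :
      (Fin.cons 0 (Pi.single j u) : Fin (n + 1) → Fin d → ℝ) = Pi.single j.succ u := by
    ext k : 1
    cases k using Fin.cases <;> simp [Pi.single_apply]
  unfold kineticDensity
  rw [Fin.sum_univ_succ]
  simp only [fderiv_comp_cons_apply hΨ, hsingle]
  exact le_add_of_nonneg_left (by positivity)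

end KineticDensity

section Energy

variable {d n : ℕ} {w : (Fin d → ℝ) → ℝ}

/-- The integrand of `energy`. -/
def energyDensity (lam : ℝ) (w : (Fin d → ℝ) → ℝ) (Ψ : (Fin n → Fin d → ℝ) → ℂ)
    (x : Fin n → Fin d → ℝ) : ℝ :=
  kineticDensity Ψ x + lam * pairPotential w x * ‖Ψ x‖ ^ 2

lemma energy_eq_integral (lam : ℝ) (w : (Fin d → ℝ) → ℝ) (Ψ : (Fin n → Fin d → ℝ) → ℂ) :
    energy d n lam w Ψ = ∫ x in cube d n, energyDensity lam w Ψ x :=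
  rfl

lemma continuous_energyDensity (hw_cont : Continuous w) {Ψ : (Fin n → Fin d → ℝ) → ℂ}
    (hΨ : ContDiff ℝ 1 Ψ) (lam : ℝ) : Continuous (energyDensity lam w Ψ) := by
  have := continuous_kineticDensity hΨ
  have := hΨ.continuous
  unfold energyDensity
  fun_prop

lemma energy_const_mul {Ψ : (Fin n → Fin d → ℝ) → ℂ} (hΨ : Differentiable ℝ Ψ) (lam : ℝ)
    (w : (Fin d → ℝ) → ℝ) (c : ℂ) :
    energy d n lam w (fun x => c * Ψ x) = ‖c‖ ^ 2 * energy d n lam w Ψ := by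
  rw [energy_eq_integral, energy_eq_integral, ← integral_const_mul]
  congr 1 with x
  rw [energyDensity, energyDensity, kineticDensity_const_mul (hΨ x), norm_mul]
  ring

lemma exists_forall_mul_integral_sq_le_energy (n : ℕ) (lam : ℝ) (hw_cont : Continuous w) :
    ∃ C : ℝ, ∀ Ψ : (Fin n → Fin d → ℝ) → ℂ, ContDiff ℝ 1 Ψ →
      C * ∫ x in cube d n, ‖Ψ x‖ ^ 2 ≤ energy d n lam w Ψ := by
  obtain ⟨C, hC⟩ := (isCompact_cube d n).bddBelow_image (f := fun x => lam * pairPotential w x)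
    (by fun_prop)
  refine ⟨C, fun Ψ hΨ => ?_⟩
  have := hΨ.continuous
  rw [energy_eq_integral, ← integral_const_mul]
  refine setIntegral_mono_on (integrable_cube (by fun_prop))
    (integrable_cube (continuous_energyDensity hw_cont hΨ lam)) (isCompact_cube d n).measurableSet
    fun x hx => ?_
  calc C * ‖Ψ x‖ ^ 2 ≤ lam * pairPotential w x * ‖Ψ x‖ ^ 2 := by
        gcongr
        exact hC ⟨x, hx, rfl⟩
    _ ≤ energyDensity lam w Ψ x := le_add_of_nonneg_left (kineticDensity_nonneg Ψ x)

end Energy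

section VariationalPrinciple

variable {d n m : ℕ} {α : Type*} {w : (Fin d → ℝ) → ℝ}

/-- `ℤ^d`-periodicity in each particle variable, as in `IsAdmissible`. -/
def IsLatticePeriodic (f : (Fin n → Fin d → ℝ) → α) : Prop :=
  ∀ (x : Fin n → Fin d → ℝ) (j : Fin n) (v : Fin d → ℤ),
    f (Function.update x j (x j + fun i => (v i : ℝ))) = f x

/-- Invariance under permutations of the particles, as in `IsAdmissible`. -/
def IsPermInvariant (f : (Fin n → Fin d → ℝ) → α) : Prop :=
  ∀ (σ : Equiv.Perm (Fin n)) (x : Fin n → Fin d → ℝ), f (x ∘ σ) = f x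

lemma IsLatticePeriodic.comp_injective {f : (Fin n → Fin d → ℝ) → α} (hf : IsLatticePeriodic f)
    {e : Fin n → Fin m} (he : Function.Injective e) :
    IsLatticePeriodic fun x : Fin m → Fin d → ℝ => f (x ∘ e) := by
  intro x k v
  by_cases hk : ∃ j, e j = k
  · obtain ⟨j, rfl⟩ := hk
    simpa only [Function.update_comp_eq_of_injective _ he, Function.comp_apply] using hf (x ∘ e) j v
  · simp only [Function.update_comp_eq_of_forall_ne _ _ (not_exists.1 hk)]

lemma IsLatticePeriodic.comp_cons {f : (Fin (n + 1) → Fin d → ℝ) → α} (hf : IsLatticePeriodic f)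
    (y : Fin d → ℝ) : IsLatticePeriodic fun x : Fin n → Fin d → ℝ => f (Fin.cons y x) := by
  intro x j v
  simpa only [Fin.cons_succ, ← Fin.cons_update] using hf (Fin.cons y x) j.succ v

lemma cons_comp_perm {E : Type*} (y : E) (x : Fin n → E) (σ : Equiv.Perm (Fin n)) :
    (Fin.cons y (x ∘ σ) : Fin (n + 1) → E) =
      (Fin.cons y x : Fin (n + 1) → E) ∘ Equiv.Perm.decomposeFin.symm (0, σ) := by
  ext j
  cases j using Fin.cases <;> simp

lemma IsPermInvariant.comp_cons {f : (Fin (n + 1) → Fin d → ℝ) → α} (hf : IsPermInvariant f)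
    (y : Fin d → ℝ) : IsPermInvariant fun x : Fin n → Fin d → ℝ => f (Fin.cons y x) := by
  intro σ x
  simp only [cons_comp_perm, hf _ _]

lemma setOf_energy_nonempty (d n : ℕ) (lam : ℝ) (w : (Fin d → ℝ) → ℝ) :
    {e | ∃ Ψ, IsAdmissible d n Ψ ∧ energy d n lam w Ψ = e}.Nonempty :=
  ⟨_, fun _ => 1, ⟨contDiff_const, fun _ _ _ => rfl, fun _ _ => rfl, by simp⟩, rfl⟩

lemma GSE_le_energy (lam : ℝ) (hw_cont : Continuous w) {Ψ : (Fin n → Fin d → ℝ) → ℂ}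
    (hΨ : IsAdmissible d n Ψ) : GSE d n lam w ≤ energy d n lam w Ψ := by
  obtain ⟨C, hC⟩ := exists_forall_mul_integral_sq_le_energy n lam hw_cont
  refine csInf_le ⟨C, ?_⟩ ⟨Ψ, hΨ, rfl⟩
  rintro _ ⟨Φ, ⟨hΦ, -, -, hΦ_norm⟩, rfl⟩
  simpa only [hΦ_norm, mul_one] using hC Φ (hΦ.of_le (mod_cast le_top))

lemma le_GSE {lam a : ℝ} (h : ∀ Ψ, IsAdmissible d n Ψ → a ≤ energy d n lam w Ψ) :
    a ≤ GSE d n lam w :=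
  le_csInf (setOf_energy_nonempty d n lam w) (by rintro _ ⟨Ψ, hΨ, rfl⟩; exact h Ψ hΨ)

lemma GSE_mul_integral_sq_le_energy_of_isPermInvariant (lam : ℝ) (hw_cont : Continuous w)
    {Ψ : (Fin n → Fin d → ℝ) → ℂ} (hΨ : ContDiff ℝ (⊤ : ℕ∞) Ψ) (hper : IsLatticePeriodic Ψ)
    (hsymm : IsPermInvariant Ψ) :
    GSE d n lam w * ∫ x in cube d n, ‖Ψ x‖ ^ 2 ≤ energy d n lam w Ψ := by
  have hmass_nonneg : 0 ≤ ∫ x in cube d n, ‖Ψ x‖ ^ 2 := integral_nonneg fun x => by positivity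
  rcases hmass_nonneg.eq_or_lt with hmass | hmass
  · obtain ⟨C, hC⟩ := exists_forall_mul_integral_sq_le_energy n lam hw_cont
    simpa only [← hmass, mul_zero] using hC Ψ (hΨ.of_le (mod_cast le_top))
  · set I := ∫ x in cube d n, ‖Ψ x‖ ^ 2 with hI
    have hc : ‖(((√I)⁻¹ : ℝ) : ℂ)‖ ^ 2 = I⁻¹ := by
      rw [Complex.norm_real, norm_eq_abs, sq_abs, inv_pow, sq_sqrt hmass.le]
    have hadm : IsAdmissible d n fun x => (((√I)⁻¹ : ℝ) : ℂ) * Ψ x := by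
      refine ⟨contDiff_const.mul hΨ, fun x j v => ?_, fun σ x => ?_, ?_⟩
      · simp only [hper x j v]
      · simp only [hsymm σ x]
      · simp only [norm_mul, mul_pow]
        rw [integral_const_mul, hc, ← hI, inv_mul_cancel₀ hmass.ne']
    have hle := GSE_le_energy lam hw_cont hadm
    rwa [energy_const_mul (hΨ.differentiable (by simp)), hc, inv_mul_eq_div, le_div_iff₀ hmass]
      at hle

end VariationalPrinciple

section Symmetrization

variable {d n : ℕ} {w : (Fin d → ℝ) → ℝ}

lemma abs_fderiv_sqrt_add_sq_apply_le {X H : Type*} [NormedAddCommGroup X] [NormedSpace ℝ X]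
    [NormedAddCommGroup H] [InnerProductSpace ℝ H] {f : X → H} {x : X}
    (hf : DifferentiableAt ℝ f x) {ε : ℝ} (hε : 0 < ε) (v : X) :
    |fderiv ℝ (fun x => √(ε + ‖f x‖ ^ 2)) x v| ≤ ‖fderiv ℝ f x v‖ := by
  have hpos : 0 < ε + ‖f x‖ ^ 2 := by positivity
  have hderiv := ((hf.hasFDerivAt.norm_sq.const_add ε).sqrt hpos.ne').fderiv
  have hnorm : ‖f x‖ ≤ √(ε + ‖f x‖ ^ 2) := le_sqrt_of_sq_le (by linarith)
  have hinner : fderiv ℝ (fun x => √(ε + ‖f x‖ ^ 2)) x v =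
      inner ℝ (f x) (fderiv ℝ f x v) / √(ε + ‖f x‖ ^ 2) := by
    rw [hderiv]
    simp only [smul_apply, ContinuousLinearMap.comp_apply, coe_innerSL_apply, nsmul_eq_mul,
      Nat.cast_ofNat, smul_eq_mul]
    field_simp
  rw [hinner, abs_div, abs_of_nonneg (sqrt_nonneg _), div_le_iff₀ (sqrt_pos.2 hpos), mul_comm]
  exact (abs_real_inner_le_norm _ _).trans (by gcongr)

lemma sq_norm_fderiv_sqrt_add_sum_sq_le {ι X H : Type*} [Fintype ι] [NormedAddCommGroup X]
    [NormedSpace ℝ X] [NormedAddCommGroup H] [InnerProductSpace ℝ H] {h : ι → X → H} {x : X}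
    (hh : ∀ i, DifferentiableAt ℝ (h i) x) {ε : ℝ} (hε : 0 < ε) (v : X) :
    ‖fderiv ℝ (fun x => ((√(ε + ∑ i, ‖h i x‖ ^ 2) : ℝ) : ℂ)) x v‖ ^ 2 ≤
      ∑ i, ‖fderiv ℝ (h i) x v‖ ^ 2 := by
  set f : X → PiLp 2 fun _ : ι => H := fun x => WithLp.toLp 2 fun i => h i x
  have hf : HasFDerivAt f _ x :=
    (PiLp.continuousLinearEquiv 2 ℝ fun _ : ι => H).symm.hasFDerivAt.comp x
      (hasFDerivAt_pi.2 fun i => (hh i).hasFDerivAt)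
  have hnorm (x : X) : ∑ i, ‖h i x‖ ^ 2 = ‖f x‖ ^ 2 := by
    rw [PiLp.norm_sq_eq_of_L2]
  have hnorm' : ∑ i, ‖fderiv ℝ (h i) x v‖ ^ 2 = ‖fderiv ℝ f x v‖ ^ 2 := by
    rw [PiLp.norm_sq_eq_of_L2, hf.fderiv]
    rfl
  have hdiff : DifferentiableAt ℝ (fun x => √(ε + ‖f x‖ ^ 2)) x :=
    ((hf.differentiableAt.norm_sq ℝ).const_add ε).sqrt (by positivity)
  have hofReal : fderiv ℝ (fun x => ((√(ε + ‖f x‖ ^ 2) : ℝ) : ℂ)) x v =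
      (fderiv ℝ (fun x => √(ε + ‖f x‖ ^ 2)) x v : ℝ) :=
    congrArg (· v) (Complex.ofRealCLM.hasFDerivAt.comp x hdiff.hasFDerivAt).fderiv
  simp only [hnorm]
  rw [hnorm', hofReal, Complex.norm_real]
  gcongr
  exact abs_fderiv_sqrt_add_sq_apply_le hf.differentiableAt hε v

/-- The symmetric state `√(ε + ∑_σ |Φ(x_σ)|²)` whose energy is at most the sum of the energies of
the permuted states, up to an error vanishing as `ε → 0`. The regularization `ε > 0` keeps it
smooth at the zeros of `Φ`; it is not normalized by the factor `n!`. -/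
def symmetrizedState (ε : ℝ) (Φ : (Fin n → Fin d → ℝ) → ℂ) (x : Fin n → Fin d → ℝ) : ℂ :=
  (√(ε + ∑ σ : Equiv.Perm (Fin n), ‖Φ (x ∘ σ)‖ ^ 2) : ℝ)

variable {ε : ℝ} {Φ : (Fin n → Fin d → ℝ) → ℂ}

lemma norm_symmetrizedState_sq (hε : 0 ≤ ε) (Φ : (Fin n → Fin d → ℝ) → ℂ)
    (x : Fin n → Fin d → ℝ) :
    ‖symmetrizedState ε Φ x‖ ^ 2 = ε + ∑ σ : Equiv.Perm (Fin n), ‖Φ (x ∘ σ)‖ ^ 2 := by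
  rw [symmetrizedState, Complex.norm_real, norm_eq_abs, sq_abs, sq_sqrt (by positivity)]

lemma contDiff_symmetrizedState (hε : 0 < ε) {k : WithTop ℕ∞} (hΦ : ContDiff ℝ k Φ) :
    ContDiff ℝ k (symmetrizedState ε Φ) := by
  have hsum : ContDiff ℝ k fun x => ε + ∑ σ : Equiv.Perm (Fin n), ‖Φ (x ∘ σ)‖ ^ 2 :=
    contDiff_const.add <| ContDiff.sum fun σ _ => (contDiff_comp_right hΦ σ).norm_sq ℝ
  exact Complex.ofRealCLM.contDiff.comp (hsum.sqrt fun x => by positivity)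

lemma isLatticePeriodic_symmetrizedState (hΦ : IsLatticePeriodic Φ) (ε : ℝ) :
    IsLatticePeriodic (symmetrizedState ε Φ) := by
  intro x j v
  simp only [symmetrizedState, fun σ : Equiv.Perm (Fin n) =>
    hΦ.comp_injective σ.injective x j v]

lemma isPermInvariant_symmetrizedState (ε : ℝ) (Φ : (Fin n → Fin d → ℝ) → ℂ) :
    IsPermInvariant (symmetrizedState ε Φ) := by
  intro τ x
  have hreindex : ∑ σ : Equiv.Perm (Fin n), ‖Φ ((x ∘ τ) ∘ σ)‖ ^ 2 =
      ∑ σ : Equiv.Perm (Fin n), ‖Φ (x ∘ σ)‖ ^ 2 :=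
    Equiv.sum_comp (Equiv.mulLeft τ) fun σ => ‖Φ (x ∘ σ)‖ ^ 2
  simp only [symmetrizedState, hreindex]

lemma kineticDensity_symmetrizedState_le (hε : 0 < ε) (hΦ : Differentiable ℝ Φ)
    (x : Fin n → Fin d → ℝ) :
    kineticDensity (symmetrizedState ε Φ) x ≤
      ∑ σ : Equiv.Perm (Fin n), kineticDensity Φ (x ∘ σ) := by
  have hcomp (σ : Equiv.Perm (Fin n)) :
      DifferentiableAt ℝ (fun x : Fin n → Fin d → ℝ => Φ (x ∘ σ)) x :=
    (hΦ _).comp x (by fun_prop)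
  calc kineticDensity (symmetrizedState ε Φ) x
      ≤ ∑ j : Fin n, ∑ i : Fin d, ∑ σ : Equiv.Perm (Fin n),
          ‖fderiv ℝ (fun x => Φ (x ∘ σ)) x (Pi.single j (Pi.single i 1))‖ ^ 2 :=
        Finset.sum_le_sum fun j _ => Finset.sum_le_sum fun i _ =>
          sq_norm_fderiv_sqrt_add_sum_sq_le hcomp hε _
    _ = ∑ σ : Equiv.Perm (Fin n), kineticDensity (fun x => Φ (x ∘ σ)) x := by
        simp only [kineticDensity, Finset.sum_comm (s := Finset.univ (α := Equiv.Perm (Fin n)))]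
    _ = ∑ σ : Equiv.Perm (Fin n), kineticDensity Φ (x ∘ σ) :=
        Finset.sum_congr rfl fun σ _ => kineticDensity_comp_injective σ.injective (hΦ _)

lemma energyDensity_symmetrizedState_le (lam : ℝ) (hw_even : ∀ v, w (-v) = w v) (hε : 0 < ε)
    (hΦ : Differentiable ℝ Φ) (x : Fin n → Fin d → ℝ) :
    energyDensity lam w (symmetrizedState ε Φ) x ≤
      ∑ σ : Equiv.Perm (Fin n), energyDensity lam w Φ (x ∘ σ) + ε * (lam * pairPotential w x) := by
  simp only [energyDensity, norm_symmetrizedState_sq hε.le, pairPotential_comp_perm hw_even,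
    Finset.sum_add_distrib, ← Finset.mul_sum]
  linarith [kineticDensity_symmetrizedState_le hε hΦ x]

lemma integral_cube_sum_comp_perm {f : (Fin n → Fin d → ℝ) → ℝ} (hf : Continuous f) :
    ∫ x in cube d n, ∑ σ : Equiv.Perm (Fin n), f (x ∘ σ) = n.factorial * ∫ x in cube d n, f x := by
  rw [integral_finsetSum _ fun σ _ => integrable_cube (by fun_prop)]
  simp only [integral_cube_comp_perm, Finset.sum_const, Finset.card_univ, Fintype.card_perm,
    Fintype.card_fin, nsmul_eq_mul]

lemma integral_norm_symmetrizedState_sq (hε : 0 ≤ ε) (hΦ : Continuous Φ) :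
    ∫ x in cube d n, ‖symmetrizedState ε Φ x‖ ^ 2 =
      ε + n.factorial * ∫ x in cube d n, ‖Φ x‖ ^ 2 := by
  simp only [norm_symmetrizedState_sq hε]
  rw [integral_add (integrable_const ε) (integrable_cube (by fun_prop)),
    integral_cube_sum_comp_perm (f := fun x => ‖Φ x‖ ^ 2) (by fun_prop)]
  simp only [integral_const, probReal_univ, one_smul]

lemma energy_symmetrizedState_le (lam : ℝ) (hw_cont : Continuous w)
    (hw_even : ∀ v, w (-v) = w v) (hε : 0 < ε) (hΦ : ContDiff ℝ 1 Φ) :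
    energy d n lam w (symmetrizedState ε Φ) ≤
      n.factorial * energy d n lam w Φ + ε * ∫ x in cube d n, lam * pairPotential w x := by
  have hdensity := continuous_energyDensity hw_cont hΦ lam
  rw [energy_eq_integral, energy_eq_integral, ← integral_cube_sum_comp_perm hdensity,
    ← integral_const_mul,
    ← integral_add (integrable_cube (by fun_prop)) (integrable_cube (by fun_prop))]
  exact integral_mono (integrable_cube (continuous_energyDensity hw_cont
    (contDiff_symmetrizedState hε hΦ) lam)) (integrable_cube (by fun_prop))
    (energyDensity_symmetrizedState_le lam hw_even hε (hΦ.differentiable one_ne_zero))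

lemma le_of_forall_pos_le_add_mul {a b c : ℝ} (h : ∀ ε : ℝ, 0 < ε → a ≤ b + ε * c) : a ≤ b := by
  have hlim : Filter.Tendsto (fun ε : ℝ => b + ε * c) (nhdsWithin 0 (Set.Ioi 0)) (nhds b) := by
    refine Filter.Tendsto.mono_left ?_ nhdsWithin_le_nhds
    exact Continuous.tendsto' (by fun_prop) 0 b (by simp)
  exact ge_of_tendsto hlim (eventually_mem_nhdsWithin.mono h)

lemma GSE_mul_integral_sq_le_energy (lam : ℝ) (hw_cont : Continuous w)
    (hw_even : ∀ v, w (-v) = w v) (hΦ : ContDiff ℝ (⊤ : ℕ∞) Φ) (hper : IsLatticePeriodic Φ) :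
    GSE d n lam w * ∫ x in cube d n, ‖Φ x‖ ^ 2 ≤ energy d n lam w Φ := by
  have hbound (ε : ℝ) (hε : 0 < ε) :
      n.factorial * (GSE d n lam w * ∫ x in cube d n, ‖Φ x‖ ^ 2) ≤
        n.factorial * energy d n lam w Φ +
          ε * ((∫ x in cube d n, lam * pairPotential w x) - GSE d n lam w) := by
    have hvar := GSE_mul_integral_sq_le_energy_of_isPermInvariant lam hw_cont
      (contDiff_symmetrizedState hε hΦ) (isLatticePeriodic_symmetrizedState hper ε)
      (isPermInvariant_symmetrizedState ε Φ)
    rw [integral_norm_symmetrizedState_sq hε.le hΦ.continuous] at hvar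
    have hen := energy_symmetrizedState_le lam hw_cont hw_even hε (hΦ.of_le (mod_cast le_top))
    linarith
  exact le_of_mul_le_mul_left (le_of_forall_pos_le_add_mul hbound) (by positivity)

end Symmetrization

section ParticleAddition

variable {d n : ℕ} {w : (Fin d → ℝ) → ℝ} {h₀ : ℝ} {Ψ : (Fin n → Fin d → ℝ) → ℂ}

lemma integral_cube_comp_succ {f : (Fin n → Fin d → ℝ) → ℝ} (hf : Continuous f) :
    ∫ x in cube d (n + 1), f (x ∘ Fin.succ) = ∫ x in cube d n, f x := by
  rw [integral_cube_succ (by fun_prop)]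
  simp only [Fin.cons_comp_succ, integral_const, probReal_univ, one_smul]

lemma energyDensity_comp_succ (lam : ℝ) (w : (Fin d → ℝ) → ℝ) (hΨ : Differentiable ℝ Ψ)
    (x : Fin (n + 1) → Fin d → ℝ) :
    energyDensity lam w (fun x => Ψ (x ∘ Fin.succ)) x =
      energyDensity lam w Ψ (x ∘ Fin.succ) +
        lam * ((∑ j : Fin n, w (x 0 - x j.succ)) * ‖Ψ (x ∘ Fin.succ)‖ ^ 2) := by
  have hpair : pairPotential w x =
      pairPotential w (x ∘ Fin.succ) + ∑ j : Fin n, w (x 0 - x j.succ) := by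
    rw [← Fin.cons_self_tail x]
    exact pairPotential_cons w (x 0) (Fin.tail x)
  rw [energyDensity, energyDensity, kineticDensity_comp_injective (Fin.succ_injective n) (hΨ _),
    hpair]
  ring

lemma integral_cube_sum_sub_mul (hw_cont : Continuous w)
    (hw_mean : ∀ c, ∫ y in cube1 d, w (y - c) = h₀) {f : (Fin n → Fin d → ℝ) → ℝ}
    (hf : Continuous f) :
    ∫ x in cube d (n + 1), (∑ j : Fin n, w (x 0 - x j.succ)) * f (x ∘ Fin.succ) =
      n * h₀ * ∫ x in cube d n, f x := by
  have hmean (x : Fin n → Fin d → ℝ) : ∫ y in cube1 d, (∑ j, w (y - x j)) * f x =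
      n * h₀ * f x := by
    rw [integral_mul_const, integral_finsetSum _ fun j _ => integrable_cube1 (by fun_prop)]
    simp [hw_mean]
  have hint : Integrable
      (Function.uncurry fun (y : Fin d → ℝ) (x : Fin n → Fin d → ℝ) => (∑ j, w (y - x j)) * f x)
      ((volume.restrict (cube1 d)).prod (volume.restrict (cube d n))) := by
    rw [Measure.prod_restrict]
    refine ContinuousOn.integrableOn_compact ((isCompact_cube1 d).prod (isCompact_cube d n))
      (Continuous.continuousOn ?_)
    simp only [Function.uncurry_def]
    fun_prop
  rw [integral_cube_succ (by fun_prop)]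
  simp only [Fin.cons_zero, Fin.cons_succ, Fin.cons_comp_succ]
  rw [integral_integral_swap hint]
  simp only [hmean, integral_const_mul]

lemma energy_comp_succ (lam : ℝ) (hw_cont : Continuous w)
    (hw_mean : ∀ c, ∫ y in cube1 d, w (y - c) = h₀) (hΨ : ContDiff ℝ 1 Ψ) :
    energy d (n + 1) lam w (fun x => Ψ (x ∘ Fin.succ)) =
      energy d n lam w Ψ + lam * (n * h₀ * ∫ x in cube d n, ‖Ψ x‖ ^ 2) := by
  have hdensity := continuous_energyDensity hw_cont hΨ lam
  have := hΨ.continuous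
  rw [energy_eq_integral, energy_eq_integral, ← integral_cube_comp_succ hdensity,
    ← integral_cube_sum_sub_mul hw_cont hw_mean (f := fun x => ‖Ψ x‖ ^ 2) (by fun_prop),
    ← integral_const_mul,
    ← integral_add (integrable_cube (by fun_prop)) (integrable_cube (by fun_prop))]
  simp only [energyDensity_comp_succ lam w (hΨ.differentiable one_ne_zero)]

theorem GSE_succ_le (lam : ℝ) (hw_cont : Continuous w) (hw_even : ∀ v, w (-v) = w v)
    (hw_mean : ∀ c, ∫ y in cube1 d, w (y - c) = h₀) :
    GSE d (n + 1) lam w ≤ GSE d n lam w + lam * (n * h₀) := by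
  refine sub_le_iff_le_add.1 (le_GSE ?_)
  rintro Ψ ⟨hΨ, hper, -, hnorm⟩
  have hvar := GSE_mul_integral_sq_le_energy lam hw_cont hw_even (contDiff_comp_right hΨ Fin.succ)
    (IsLatticePeriodic.comp_injective hper (Fin.succ_injective n))
  have hΨ_cont := hΨ.continuous
  have hmass := integral_cube_comp_succ (f := fun x => ‖Ψ x‖ ^ 2) (by fun_prop)
  rw [energy_comp_succ lam hw_cont hw_mean (hΨ.of_le (mod_cast le_top)), hmass, hnorm] at hvar
  linarith

end ParticleAddition

section ParticleRemoval

variable {d n : ℕ} {w : (Fin d → ℝ) → ℝ}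

lemma energyDensity_comp_cons_add_le (lam : ℝ) (w : (Fin d → ℝ) → ℝ)
    {Ψ : (Fin (n + 1) → Fin d → ℝ) → ℂ} (hΨ : Differentiable ℝ Ψ) (y : Fin d → ℝ)
    (x : Fin n → Fin d → ℝ) :
    energyDensity lam w (fun x => Ψ (Fin.cons y x)) x +
        lam * (interactionOf w (Fin.cons y x : Fin (n + 1) → Fin d → ℝ) 0 *
          ‖Ψ (Fin.cons y x)‖ ^ 2) ≤
      energyDensity lam w Ψ (Fin.cons y x) := by
  rw [energyDensity, energyDensity, pairPotential_cons, interactionOf_cons_zero]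
  linarith [kineticDensity_comp_cons_le (hΨ (Fin.cons y x))]

lemma GSE_mul_integral_cons_sq_le (lam : ℝ) (hw_cont : Continuous w)
    {Ψ : (Fin (n + 1) → Fin d → ℝ) → ℂ} (hΨ : ContDiff ℝ (⊤ : ℕ∞) Ψ)
    (hper : IsLatticePeriodic Ψ) (hsymm : IsPermInvariant Ψ) (y : Fin d → ℝ) :
    GSE d n lam w * (∫ x in cube d n, ‖Ψ (Fin.cons y x)‖ ^ 2) ≤
      ∫ x in cube d n, (energyDensity lam w Ψ (Fin.cons y x) -
        lam * (interactionOf w (Fin.cons y x : Fin (n + 1) → Fin d → ℝ) 0 *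
          ‖Ψ (Fin.cons y x)‖ ^ 2)) := by
  have hΨ₁ : ContDiff ℝ 1 Ψ := hΨ.of_le (mod_cast le_top)
  have := hΨ.continuous
  have := continuous_energyDensity hw_cont hΨ₁ lam
  refine (GSE_mul_integral_sq_le_energy_of_isPermInvariant lam hw_cont
    (contDiff_comp_cons hΨ y) (hper.comp_cons y) (hsymm.comp_cons y)).trans ?_
  exact integral_mono
    (integrable_cube (continuous_energyDensity hw_cont (contDiff_comp_cons hΨ₁ y) lam))
    (integrable_cube (by fun_prop)) fun x => le_sub_iff_add_le.2
      (energyDensity_comp_cons_add_le lam w (hΨ₁.differentiable one_ne_zero) y x)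

lemma GSE_mul_add_le_energy_succ (lam : ℝ) (hw_cont : Continuous w)
    {Ψ : (Fin (n + 1) → Fin d → ℝ) → ℂ} (hΨ : ContDiff ℝ (⊤ : ℕ∞) Ψ)
    (hper : IsLatticePeriodic Ψ) (hsymm : IsPermInvariant Ψ) :
    GSE d n lam w * (∫ x in cube d (n + 1), ‖Ψ x‖ ^ 2) +
        lam * (∫ x in cube d (n + 1), interactionOf w x 0 * ‖Ψ x‖ ^ 2) ≤
      energy d (n + 1) lam w Ψ := by
  have hΨ_cont := hΨ.continuous
  have hdensity := continuous_energyDensity hw_cont (hΨ.of_le (mod_cast le_top)) lam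
  have hmass_cont : Continuous fun x => ‖Ψ x‖ ^ 2 := by fun_prop
  have hrest_cont : Continuous fun x =>
      energyDensity lam w Ψ x - lam * (interactionOf w x 0 * ‖Ψ x‖ ^ 2) := by fun_prop
  have hint : GSE d n lam w * (∫ x in cube d (n + 1), ‖Ψ x‖ ^ 2) ≤
      ∫ x in cube d (n + 1),
        (energyDensity lam w Ψ x - lam * (interactionOf w x 0 * ‖Ψ x‖ ^ 2)) := by
    rw [integral_cube_succ hmass_cont, integral_cube_succ hrest_cont, ← integral_const_mul]
    exact integral_mono
      (integrable_cube1 (continuous_const.mul (continuous_integral_cube_cons hmass_cont)))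
      (integrable_cube1 (continuous_integral_cube_cons hrest_cont))
      (GSE_mul_integral_cons_sq_le lam hw_cont hΨ hper hsymm)
  rw [integral_sub (integrable_cube hdensity) (integrable_cube (by fun_prop)),
    integral_const_mul] at hint
  rw [energy_eq_integral]
  linarith

lemma mul_integral_interactionOf_mul (hw_cont : Continuous w) (hw_even : ∀ v, w (-v) = w v)
    {ρ : (Fin n → Fin d → ℝ) → ℝ} (hρ : Continuous ρ) (hρ_symm : IsPermInvariant ρ) (i : Fin n) :
    n * ∫ x in cube d n, interactionOf w x i * ρ x =
      ∫ x in cube d n, 2 * pairPotential w x * ρ x := by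
  have hexchange (j : Fin n) : ∫ x in cube d n, interactionOf w x j * ρ x =
      ∫ x in cube d n, interactionOf w x i * ρ x := by
    rw [← integral_cube_comp_perm (Equiv.swap i j) fun x => interactionOf w x i * ρ x]
    simp only [interactionOf_comp_perm, hρ_symm _ _, Equiv.swap_apply_left]
  simp only [← sum_interactionOf hw_even, Finset.sum_mul]
  rw [integral_finsetSum _ fun j _ => integrable_cube (by fun_prop)]
  simp [hexchange]

theorem GSE_add_le_GSE_succ {lam : ℝ} (hlam : 0 ≤ lam) (hw_cont : Continuous w)
    (hw_even : ∀ v, w (-v) = w v) {C : ℝ}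
    (hC : ∀ x : Fin (n + 1) → Fin d → ℝ, (n + 1) * C ≤ 2 * pairPotential w x) :
    GSE d n lam w + lam * C ≤ GSE d (n + 1) lam w := by
  refine le_GSE ?_
  rintro Ψ ⟨hΨ, hper, hsymm, hnorm⟩
  have hΨ_cont := hΨ.continuous
  have hlost : C ≤ ∫ x in cube d (n + 1), interactionOf w x 0 * ‖Ψ x‖ ^ 2 := by
    refine le_of_mul_le_mul_left ?_ (n.cast_add_one_pos (α := ℝ))
    calc (n + 1) * C = ∫ x in cube d (n + 1), (n + 1) * C * ‖Ψ x‖ ^ 2 := by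
          rw [integral_const_mul, hnorm, mul_one]
      _ ≤ ∫ x in cube d (n + 1), 2 * pairPotential w x * ‖Ψ x‖ ^ 2 :=
          integral_mono (integrable_cube (by fun_prop)) (integrable_cube (by fun_prop)) fun x =>
            mul_le_mul_of_nonneg_right (hC x) (by positivity)
      _ = (n + 1) * ∫ x in cube d (n + 1), interactionOf w x 0 * ‖Ψ x‖ ^ 2 := by
          rw [← mul_integral_interactionOf_mul hw_cont hw_even (ρ := fun x => ‖Ψ x‖ ^ 2)
            (by fun_prop) (fun σ x => by simp only [hsymm σ x]) 0, Nat.cast_succ]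
  have hsplit := GSE_mul_add_le_energy_succ lam hw_cont hΨ hper hsymm
  rw [hnorm, mul_one] at hsplit
  exact le_trans (by gcongr) hsplit

end ParticleRemoval

section BindingEnergy

variable {d : ℕ} {hw : (Fin d → ℤ) → ℝ}

lemma GSE_succ_wOf_le (hs : Summable hw) (n : ℕ) (lam : ℝ) :
    GSE d (n + 1) lam (wOf d hw) ≤ GSE d n lam (wOf d hw) + lam * (n * hw 0) :=
  GSE_succ_le lam (continuous_wOf hs) (wOf_neg hs) (integral_cube1_wOf_sub hs)

lemma GSE_wOf_add_le (hw_nonneg : ∀ k, 0 ≤ hw k) (hs : Summable hw) (n : ℕ) {lam : ℝ}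
    (hlam : 0 ≤ lam) :
    GSE d n lam (wOf d hw) + lam * ((n + 1) * hw 0 - wOf d hw 0) ≤
      GSE d (n + 1) lam (wOf d hw) :=
  GSE_add_le_GSE_succ hlam (continuous_wOf hs) (wOf_neg hs) fun x => by
    simpa only [Nat.cast_succ] using mul_le_two_mul_pairPotential_wOf hw_nonneg hs x

lemma tendsto_zero_of_tendsto_natCast_mul {f : ℕ → ℝ} {l : ℝ}
    (hf : Filter.Tendsto (fun N : ℕ => (N : ℝ) * f N) Filter.atTop (nhds l)) :
    Filter.Tendsto f Filter.atTop (nhds 0) := by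
  have hmul := tendsto_inv_atTop_nhds_zero_nat (𝕜 := ℝ).mul hf
  rw [zero_mul] at hmul
  refine hmul.congr' ?_
  filter_upwards [Filter.eventually_ne_atTop 0] with N hN
  exact inv_mul_cancel_left₀ (Nat.cast_ne_zero.2 hN) (f N)

theorem binding_energy_leading_order_general (hw_nonneg : ∀ k, 0 ≤ hw k) (hs : Summable hw)
    {lam : ℕ → ℝ} (hlam_nonneg : ∀ᶠ N in Filter.atTop, 0 ≤ lam N)
    (hlam_lim : Filter.Tendsto lam Filter.atTop (nhds 0)) :
    Filter.Tendsto
      (fun N : ℕ =>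
        GSE d N (lam N) (wOf d hw) - GSE d (N - 1) (lam N) (wOf d hw) -
          lam N * ((N : ℝ) - 1) * hw 0)
      Filter.atTop (nhds 0) := by
  have hlower : Filter.Tendsto (fun N => lam N * (hw 0 - wOf d hw 0)) Filter.atTop (nhds 0) := by
    simpa only [zero_mul] using hlam_lim.mul_const (hw 0 - wOf d hw 0)
  refine tendsto_of_tendsto_of_tendsto_of_le_of_le' hlower tendsto_const_nhds ?_ ?_
  · filter_upwards [hlam_nonneg, Filter.eventually_ne_atTop 0] with N hlam hN
    obtain ⟨n, rfl⟩ := Nat.exists_eq_succ_of_ne_zero hN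
    have hle := GSE_wOf_add_le hw_nonneg hs n hlam
    rw [Nat.succ_eq_add_one, Nat.add_sub_cancel, Nat.cast_add_one]
    linarith
  · filter_upwards [Filter.eventually_ne_atTop 0] with N hN
    obtain ⟨n, rfl⟩ := Nat.exists_eq_succ_of_ne_zero hN
    have hle := GSE_succ_wOf_le hs n (lam (n + 1))
    rw [Nat.succ_eq_add_one, Nat.add_sub_cancel, Nat.cast_add_one]
    linarith

end BindingEnergy

/-- **Leading order of the binding energy.** If `N·λ_N → 1`, then
`E(λ_N,N) - E(λ_N,N-1) - λ_N (N-1) ŵ(0) → 0`. -/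
theorem binding_energy_leading_order (d : ℕ) (hd : 1 ≤ d)
    (hw : (Fin d → ℤ) → ℝ) (hw_nonneg : ∀ k, 0 ≤ hw k)
    (hw_even : ∀ k, hw (-k) = hw k) (hw_summable : Summable hw)
    (lam : ℕ → ℝ) (hlam_pos : ∀ N, 2 ≤ N → 0 < lam N)
    (hlam_lim : Filter.Tendsto (fun N : ℕ => (N : ℝ) * lam N) Filter.atTop (nhds 1)) :
    Filter.Tendsto
      (fun N : ℕ =>
        GSE d N (lam N) (wOf d hw) - GSE d (N - 1) (lam N) (wOf d hw) -
          lam N * ((N : ℝ) - 1) * hw 0)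
      Filter.atTop (nhds 0) :=
  binding_energy_leading_order_general hw_nonneg hw_summable
    ((Filter.eventually_ge_atTop 2).mono fun N hN => (hlam_pos N hN).le)
    (tendsto_zero_of_tendsto_natCast_mul hlam_lim)
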